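/- Let N ≥ 2, let μ > 0, λ + μ > 0, k ≠ 0, a > 0, γ > 1, and ρ₀ ≥ 0 be real constants. Suppose (ρ, v, Φ) is a smooth solution on ℝ^N of the stationary compressible Navier–Stokes–Poisson system: div(ρv) = 0, div(ρ v⊗v) = -∇p + kρ∇Φ + μΔv + (μ+λ)∇(div v), ΔΦ = ρ - ρ₀, with pressure law p = aρ^γ and ρ ≥ 0. Assume ρ ∈ L^∞(ℝ^N), Φ ∈ L^∞(ℝ^N), ∇v ∈ L²(ℝ^N), v ∈ L^{N/(N-1)}(ℝ^N), and additionally v ∈ L^{3N/(N-1)}(ℝ^N) in case N ≥ 7. Then v = 0 identically on ℝ^N, and ρ, Φ satisfy the reduced system kρ∇Φ = a∇(ρ^γ) and ΔΦ = ρ - ρ₀ on ℝ^N. -/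

import Mathlib

open MeasureTheory Real Filter

noncomputable section

/-- Partial derivative `∂ⱼ f (x)` of a scalar function on `ℝ^N`. -/
def pd (N : ℕ) (f : EuclideanSpace ℝ (Fin N) → ℝ) (j : Fin N)
    (x : EuclideanSpace ℝ (Fin N)) : ℝ :=
  fderiv ℝ f x (EuclideanSpace.single j 1)

/-- Divergence of a vector field on `ℝ^N`. -/
def divV (N : ℕ) (v : EuclideanSpace ℝ (Fin N) → EuclideanSpace ℝ (Fin N))
    (x : EuclideanSpace ℝ (Fin N)) : ℝ :=
  ∑ j, pd N (fun y => v y j) j x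

/-- Laplacian of a scalar function on `ℝ^N`. -/
def lap (N : ℕ) (f : EuclideanSpace ℝ (Fin N) → ℝ)
    (x : EuclideanSpace ℝ (Fin N)) : ℝ :=
  ∑ j, pd N (pd N f j) j x

/-!
Taking the scalar product of the momentum equation with `v` and using `div(ρv) = 0`, every term
except the dissipation becomes a divergence: `div F = μ|∇v|² + (μ + λ)(div v)²`. The flux `F` is the
sum of a bounded multiple of `v`, which lies in `L^{N/(N-1)}`, and of an integrable field, since
`∇v ∈ L²` and `v ∈ L² ∩ L³`. For `N ≤ 6` the bound `v ∈ L³` comes from the Sobolev inequality,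
applied to `v` for `3 ≤ N ≤ 6` and to `|v|²` for `N = 2`.

Testing against cutoffs at scale `n`, whose gradients are bounded both in `L^N` and in `L^∞` and
live outside the ball of radius `n`, shows that `∫ div F = 0`. Hence `∇v = 0`, so `v` is a constant
in `L^{N/(N-1)}`, that is, `v = 0`, and the momentum equation reduces to `kρ∇Φ = a∇(ρ^γ)`.
-/

open scoped ENNReal NNReal Topology

section Cutoff

lemma eventually_lt_natCast_add_one (r : ℝ) : ∀ᶠ n : ℕ in atTop, r < n + 1 :=
  ((tendsto_natCast_atTop_atTop (R := ℝ)).eventually_ge_atTop r).mono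
    fun _ hn => hn.trans_lt (lt_add_one _)

variable {E : Type*} [NormedAddCommGroup E] [NormedSpace ℝ E]

lemma norm_inv_smul_eq_div (n : ℕ) (x : E) : ‖((n : ℝ) + 1)⁻¹ • x‖ = ‖x‖ / (n + 1) := by
  rw [norm_smul, norm_inv, Real.norm_of_nonneg (by positivity), inv_mul_eq_div]

variable [FiniteDimensional ℝ E]

/-- The standard cutoff at scale `n + 1`: a fixed smooth bump, equal to `1` on the unit ball and
supported in the ball of radius `2`, dilated by `n + 1` so that `n = 0` is not degenerate. -/
def cutoff (n : ℕ) (x : E) : ℝ :=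
  (⟨1, 2, one_pos, one_lt_two⟩ : ContDiffBump (0 : E)) (((n : ℝ) + 1)⁻¹ • x)

lemma contDiff_cutoff (n : ℕ) : ContDiff ℝ 1 (cutoff n : E → ℝ) :=
  (ContDiffBump.contDiff _).comp (contDiff_const_smul _)

lemma hasCompactSupport_cutoff (n : ℕ) : HasCompactSupport (cutoff n : E → ℝ) :=
  (ContDiffBump.hasCompactSupport _).comp_smul (by positivity)

lemma cutoff_nonneg (n : ℕ) (x : E) : 0 ≤ cutoff n x :=
  ContDiffBump.nonneg _

lemma cutoff_le_one (n : ℕ) (x : E) : cutoff n x ≤ 1 :=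
  ContDiffBump.le_one _

lemma norm_cutoff_le_one (n : ℕ) (x : E) : ‖cutoff n x‖ ≤ 1 := by
  rw [Real.norm_of_nonneg (cutoff_nonneg n x)]
  exact cutoff_le_one n x

lemma cutoff_eq_one {n : ℕ} {x : E} (hx : ‖x‖ ≤ n + 1) : cutoff n x = 1 := by
  refine ContDiffBump.one_of_mem_closedBall _ ?_
  rw [mem_closedBall_zero_iff, norm_inv_smul_eq_div]
  exact (div_le_one (by positivity)).2 hx

lemma cutoff_eq_zero {n : ℕ} {x : E} (hx : 2 * (n + 1) ≤ ‖x‖) : cutoff n x = 0 := by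
  refine ContDiffBump.zero_of_le_dist _ ?_
  rw [dist_zero_right, norm_inv_smul_eq_div]
  exact (le_div_iff₀ (by positivity)).2 hx

lemma tendsto_cutoff_smul {F : Type*} [NormedAddCommGroup F] [NormedSpace ℝ F] (x : E) (y : F) :
    Tendsto (fun n => cutoff n x • y) atTop (𝓝 y) :=
  tendsto_nhds_of_eventually_eq <| (eventually_lt_natCast_add_one ‖x‖).mono fun n hn => by
    rw [cutoff_eq_one hn.le, one_smul]

lemma fderiv_cutoff_eq_zero_of_norm_lt {n : ℕ} {x : E} (hx : ‖x‖ < n + 1) :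
    fderiv ℝ (cutoff n) x = 0 := by
  have h : (cutoff n : E → ℝ) =ᶠ[𝓝 x] fun _ => 1 := by
    filter_upwards [(isOpen_lt continuous_norm continuous_const).mem_nhds hx] with y hy
    exact cutoff_eq_one hy.le
  rw [h.fderiv_eq, fderiv_fun_const, Pi.zero_apply]

lemma fderiv_cutoff_eq_zero_of_lt_norm {n : ℕ} {x : E} (hx : 2 * (n + 1) < ‖x‖) :
    fderiv ℝ (cutoff n) x = 0 := by
  have h : (cutoff n : E → ℝ) =ᶠ[𝓝 x] fun _ => 0 := by
    filter_upwards [(isOpen_lt continuous_const continuous_norm).mem_nhds hx] with y hy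
    exact cutoff_eq_zero hy.le
  rw [h.fderiv_eq, fderiv_fun_const, Pi.zero_apply]

lemma support_fderiv_cutoff_subset (n : ℕ) :
    Function.support (fderiv ℝ (cutoff n : E → ℝ)) ⊆ Metric.closedBall 0 (2 * (n + 1)) :=
  fun _ hx => mem_closedBall_zero_iff.2 <|
    le_of_not_gt fun hlt => hx (fderiv_cutoff_eq_zero_of_lt_norm hlt)

variable (E) in
lemma exists_norm_fderiv_cutoff_le :
    ∃ M : ℝ≥0, ∀ (n : ℕ) (x : E), ‖fderiv ℝ (cutoff n) x‖ ≤ M / (n + 1) := by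
  let φ : ContDiffBump (0 : E) := ⟨1, 2, one_pos, one_lt_two⟩
  obtain ⟨M, hM⟩ := (φ.contDiff.continuous_fderiv one_ne_zero).bounded_above_of_compact_support
    (φ.hasCompactSupport.fderiv (𝕜 := ℝ))
  lift M to ℝ≥0 using (norm_nonneg _).trans (hM 0)
  refine ⟨M, fun n x => ?_⟩
  change ‖fderiv ℝ (fun y => φ (((n : ℝ) + 1)⁻¹ • y)) x‖ ≤ _
  rw [fderiv_comp_smul, norm_smul, norm_inv, Real.norm_of_nonneg (by positivity), inv_mul_eq_div]
  gcongr
  exact hM _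

/-- Smooth truncation of a vector at length of order `n + 1`; composed with a function it makes the
function bounded while increasing its derivative by at most a constant factor. -/
def truncation (n : ℕ) (y : E) : E := cutoff n y • y

lemma contDiff_truncation (n : ℕ) : ContDiff ℝ 1 (truncation n : E → E) :=
  (contDiff_cutoff n).smul contDiff_id

lemma norm_truncation_le (n : ℕ) (y : E) : ‖truncation n y‖ ≤ ‖y‖ := by
  rw [truncation, norm_smul]
  exact mul_le_of_le_one_left (norm_nonneg y) (norm_cutoff_le_one n y)

lemma norm_truncation_le_two_mul (n : ℕ) (y : E) : ‖truncation n y‖ ≤ 2 * (n + 1) := by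
  rcases le_total (2 * ((n : ℝ) + 1)) ‖y‖ with hy | hy
  · rw [truncation, cutoff_eq_zero hy, zero_smul, norm_zero]
    positivity
  · exact (norm_truncation_le n y).trans hy

lemma tendsto_truncation (y : E) : Tendsto (fun n => truncation n y) atTop (𝓝 y) :=
  tendsto_cutoff_smul y y

variable (E) in
lemma exists_norm_fderiv_truncation_le :
    ∃ K : ℝ≥0, ∀ (n : ℕ) (y : E), ‖fderiv ℝ (truncation n) y‖ ≤ K := by
  obtain ⟨M, hM⟩ := exists_norm_fderiv_cutoff_le E
  refine ⟨1 + 2 * M, fun n y => ?_⟩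
  have hderiv : fderiv ℝ (truncation n) y =
      cutoff n y • ContinuousLinearMap.id ℝ E + (fderiv ℝ (cutoff n) y).smulRight y :=
    (((contDiff_cutoff n).differentiable one_ne_zero y).hasFDerivAt.smul (hasFDerivAt_id y)).fderiv
  have hfar : ‖fderiv ℝ (cutoff n) y‖ * ‖y‖ ≤ 2 * M := by
    rcases lt_or_ge (2 * ((n : ℝ) + 1)) ‖y‖ with hy | hy
    · rw [fderiv_cutoff_eq_zero_of_lt_norm hy, norm_zero, zero_mul]
      positivity
    · calc ‖fderiv ℝ (cutoff n) y‖ * ‖y‖ ≤ M / (n + 1) * (2 * (n + 1)) := by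
            gcongr
            exact hM n y
        _ = 2 * M := by field_simp
  calc ‖fderiv ℝ (truncation n) y‖
      ≤ ‖cutoff n y‖ * ‖ContinuousLinearMap.id ℝ E‖ + ‖fderiv ℝ (cutoff n) y‖ * ‖y‖ := by
        rw [hderiv, ← norm_smul, ← ContinuousLinearMap.norm_smulRight_apply]
        exact norm_add_le _ _
    _ ≤ 1 * 1 + 2 * M := by
        gcongr
        · exact norm_cutoff_le_one n y
        · exact ContinuousLinearMap.norm_id_le
    _ = ((1 + 2 * M : ℝ≥0) : ℝ) := by push_cast; ring

end Cutoff

section LebesgueExponents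

variable {α F : Type*} {m : MeasurableSpace α} {μ : Measure α} [NormedAddCommGroup F] {f : α → F}

lemma memLp_of_exponent_le_of_bound {p q : ℝ≥0∞} (hp : p ≠ 0) (hpq : p ≤ q) (hf : MemLp f p μ)
    {C : ℝ≥0} (hC : ∀ x, ‖f x‖ ≤ C) : MemLp f q μ := by
  rcases eq_or_ne q ∞ with rfl | hq
  · exact memLp_top_of_bound hf.1 C (ae_of_all _ hC)
  have hq0 : q ≠ 0 := (hp.bot_lt.trans_le hpq).ne'
  have hp_top : p ≠ ∞ := ne_top_of_le_ne_top hq hpq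
  have hexp : 0 ≤ q.toReal - p.toReal := sub_nonneg.2 (ENNReal.toReal_mono hq hpq)
  refine ⟨hf.1, (eLpNorm_lt_top_iff_lintegral_rpow_enorm_lt_top hq0 hq).2 ?_⟩
  calc ∫⁻ x, ‖f x‖ₑ ^ q.toReal ∂μ
      ≤ ∫⁻ x, (C : ℝ≥0∞) ^ (q.toReal - p.toReal) * ‖f x‖ₑ ^ p.toReal ∂μ := by
        refine lintegral_mono fun x => ?_
        rw [← sub_add_cancel q.toReal p.toReal,
          ENNReal.rpow_add_of_nonneg _ _ hexp ENNReal.toReal_nonneg, sub_add_cancel]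
        gcongr
        exact enorm_le_coe.2 (hC x)
    _ = (C : ℝ≥0∞) ^ (q.toReal - p.toReal) * ∫⁻ x, ‖f x‖ₑ ^ p.toReal ∂μ :=
        lintegral_const_mul' _ _ (ENNReal.rpow_ne_top_of_nonneg hexp ENNReal.coe_ne_top)
    _ < ∞ := ENNReal.mul_lt_top (ENNReal.rpow_lt_top_of_nonneg hexp ENNReal.coe_ne_top)
        (lintegral_rpow_enorm_lt_top_of_eLpNorm_lt_top hp hp_top hf.2)

lemma rpow_le_rpow_add_rpow {p s r : ℝ} (hps : p ≤ s) (hsr : s ≤ r) (x : ℝ≥0∞) :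
    x ^ s ≤ x ^ p + x ^ r := by
  rcases le_total x 1 with hx | hx
  · exact (ENNReal.rpow_le_rpow_of_exponent_ge hx hps).trans le_self_add
  · exact (ENNReal.rpow_le_rpow_of_exponent_le hx hsr).trans le_add_self

lemma memLp_of_memLp_of_memLp {p s r : ℝ≥0∞} (hp : p ≠ 0) (hps : p ≤ s) (hsr : s ≤ r) (hr : r ≠ ∞)
    (hfp : MemLp f p μ) (hfr : MemLp f r μ) : MemLp f s μ := by
  have hs : s ≠ ∞ := ne_top_of_le_ne_top hr hsr
  have hs0 : s ≠ 0 := (hp.bot_lt.trans_le hps).ne'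
  refine ⟨hfp.1, (eLpNorm_lt_top_iff_lintegral_rpow_enorm_lt_top hs0 hs).2 ?_⟩
  calc ∫⁻ x, ‖f x‖ₑ ^ s.toReal ∂μ
      ≤ ∫⁻ x, (‖f x‖ₑ ^ p.toReal + ‖f x‖ₑ ^ r.toReal) ∂μ :=
        lintegral_mono fun x => rpow_le_rpow_add_rpow (ENNReal.toReal_mono hs hps)
          (ENNReal.toReal_mono hr hsr) _
    _ = ∫⁻ x, ‖f x‖ₑ ^ p.toReal ∂μ + ∫⁻ x, ‖f x‖ₑ ^ r.toReal ∂μ :=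
        lintegral_add_left' (hfp.1.enorm.pow_const _) _
    _ < ∞ := ENNReal.add_lt_top.2
        ⟨lintegral_rpow_enorm_lt_top_of_eLpNorm_lt_top hp (ne_top_of_le_ne_top hs hps) hfp.2,
          lintegral_rpow_enorm_lt_top_of_eLpNorm_lt_top (hs0.bot_lt.trans_le hsr).ne' hr hfr.2⟩

lemma memLp_norm_sq_iff {p : ℝ≥0∞} (hf : AEStronglyMeasurable f μ) :
    MemLp (fun x => ‖f x‖ ^ 2) p μ ↔ MemLp f (2 * p) μ := by
  have h := memLp_norm_rpow_iff (p := 2 * p) hf two_ne_zero ENNReal.ofNat_ne_top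
  rw [mul_comm 2 p, ENNReal.mul_div_cancel_right two_ne_zero ENNReal.ofNat_ne_top] at h
  simpa [mul_comm 2 p] using h

lemma holderConjugate_natCast_le_two {q : ℝ≥0∞} {n : ℕ} [q.HolderConjugate n] (hn : 2 ≤ n) :
    q ≤ 2 := by
  rw [← ENNReal.inv_le_inv]
  refine ENNReal.le_of_add_le_add_right (a := 2⁻¹) (by simp) ?_
  calc (2 : ℝ≥0∞)⁻¹ + 2⁻¹ = q⁻¹ + (n : ℝ≥0∞)⁻¹ := by
        rw [ENNReal.HolderConjugate.inv_add_inv_eq_one q n, ENNReal.inv_two_add_inv_two]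
    _ ≤ q⁻¹ + 2⁻¹ := by
        gcongr
        exact_mod_cast hn

lemma memLp_ofReal_of_integrable_norm_rpow {r : ℝ} (hr : 0 < r) (hf : AEStronglyMeasurable f μ)
    (hint : Integrable (fun x => ‖f x‖ ^ r) μ) : MemLp f (ENNReal.ofReal r) μ :=
  (integrable_norm_rpow_iff hf (ENNReal.ofReal_pos.2 hr).ne' ENNReal.ofReal_ne_top).1
    (by rwa [ENNReal.toReal_ofReal hr.le])

lemma holderConjugate_ofReal_div_sub_one {n : ℕ} (hn : 2 ≤ n) :
    (ENNReal.ofReal (n / (n - 1))).HolderConjugate n := by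
  have h := (Real.HolderConjugate.conjExponent (p := n) (mod_cast hn)).symm.ennrealOfReal
  rwa [Real.conjExponent, ENNReal.ofReal_natCast] at h

lemma memLp_three_of_integrable_norm_rpow {n : ℕ} (hn : 2 ≤ n)
    (hfp : MemLp f (ENNReal.ofReal (n / (n - 1))) μ)
    (hint : Integrable (fun x => ‖f x‖ ^ (3 * (n : ℝ) / (n - 1))) μ) : MemLp f 3 μ := by
  have hn₁ : 0 < (n : ℝ) - 1 := sub_pos.2 (mod_cast hn)
  have hconj := holderConjugate_ofReal_div_sub_one hn
  have hle : ENNReal.ofReal (n / (n - 1)) ≤ 3 :=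
    (holderConjugate_natCast_le_two hn).trans (by norm_num)
  have hge : 3 ≤ ENNReal.ofReal (3 * (n : ℝ) / (n - 1)) := by
    rw [← ENNReal.ofReal_ofNat]
    refine ENNReal.ofReal_le_ofReal ((le_div_iff₀ hn₁).2 ?_)
    linarith
  exact memLp_of_memLp_of_memLp hconj.ne_zero hle hge ENNReal.ofReal_ne_top hfp
    (memLp_ofReal_of_integrable_norm_rpow (by positivity) hfp.1 hint)

lemma natCast_mul_inv_toReal_le_one {d : ℕ} {q : ℝ≥0∞} (hdq : d ≤ q) : d * q.toReal⁻¹ ≤ 1 := by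
  rcases eq_or_ne q ∞ with rfl | hq_top
  · simp
  · refine div_le_one_of_le₀ ?_ ENNReal.toReal_nonneg
    simpa using ENNReal.toReal_mono hq_top hdq

end LebesgueExponents

section Sobolev

variable {E F : Type*} [NormedAddCommGroup E] [NormedSpace ℝ E] [FiniteDimensional ℝ E]
  [NormedAddCommGroup F] [NormedSpace ℝ F]

lemma norm_fderiv_cutoff_smul_le {u : E → F} (hu : ContDiff ℝ 1 u) (n : ℕ) (x : E) :
    ‖fderiv ℝ (fun y => cutoff n y • u y) x‖ ≤
      ‖fderiv ℝ u x‖ + ‖fderiv ℝ (cutoff n) x‖ * ‖u x‖ := by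
  rw [fderiv_fun_smul ((contDiff_cutoff n).differentiable one_ne_zero x)
    (hu.differentiable one_ne_zero x)]
  refine (norm_add_le _ _).trans (add_le_add ?_ ?_)
  · rw [norm_smul]
    exact mul_le_of_le_one_left (norm_nonneg _) (norm_cutoff_le_one n x)
  · rw [ContinuousLinearMap.norm_smulRight_apply]

variable [MeasurableSpace E] [BorelSpace E] {μ : Measure E}

lemma eLpNorm_fderiv_cutoff_smul_le {u : E → F} (hu : ContDiff ℝ 1 u) {p : ℝ≥0∞} (hp : 1 ≤ p)
    {n : ℕ} {C : ℝ≥0} (hC : ∀ x : E, ‖fderiv ℝ (cutoff n) x‖ ≤ C) :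
    eLpNorm (fderiv ℝ fun x => cutoff n x • u x) p μ ≤
      eLpNorm (fderiv ℝ u) p μ + C * eLpNorm u p μ := by
  calc eLpNorm (fderiv ℝ fun x => cutoff n x • u x) p μ
      ≤ eLpNorm ((fun x => ‖fderiv ℝ u x‖) + (C : ℝ) • fun x => ‖u x‖) p μ :=
        eLpNorm_mono_real fun x => (norm_fderiv_cutoff_smul_le hu n x).trans <| by
          dsimp
          gcongr
          exact hC x
    _ ≤ eLpNorm (fun x => ‖fderiv ℝ u x‖) p μ + eLpNorm ((C : ℝ) • fun x => ‖u x‖) p μ :=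
        eLpNorm_add_le (hu.continuous_fderiv one_ne_zero).norm.aestronglyMeasurable
          (hu.continuous.norm.const_smul _).aestronglyMeasurable hp
    _ = eLpNorm (fderiv ℝ u) p μ + C * eLpNorm u p μ := by
        rw [eLpNorm_norm, eLpNorm_const_smul, eLpNorm_norm,
          Real.enorm_of_nonneg C.coe_nonneg, ENNReal.ofReal_coe_nnreal]

variable [μ.IsAddHaarMeasure] [FiniteDimensional ℝ F]

lemma eLpNorm_le_eLpNorm_fderiv_of_memLp {u : E → F} (hu : ContDiff ℝ 1 u) {p p' : ℝ≥0}
    (hp : 1 ≤ p) (hE : 0 < Module.finrank ℝ E)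
    (hp' : (p' : ℝ)⁻¹ = (p : ℝ)⁻¹ - (Module.finrank ℝ E : ℝ)⁻¹) (hup : MemLp u p μ) :
    eLpNorm u p' μ ≤ SNormLESNormFDerivOfEqConst F μ p * eLpNorm (fderiv ℝ u) p μ := by
  obtain ⟨M, hM⟩ := exists_norm_fderiv_cutoff_le E
  set S := SNormLESNormFDerivOfEqConst F μ p
  have hcutoff (n : ℕ) : eLpNorm (fun x => cutoff n x • u x) p' μ ≤
      S * (eLpNorm (fderiv ℝ u) p μ + (M / (n + 1) : ℝ≥0) * eLpNorm u p μ) :=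
    (eLpNorm_le_eLpNorm_fderiv_of_eq μ ((contDiff_cutoff n).smul hu)
      (hasCompactSupport_cutoff n).smul_right hp hE hp').trans <| by
      gcongr
      exact eLpNorm_fderiv_cutoff_smul_le hu (by exact_mod_cast hp)
        fun x => by exact_mod_cast hM n x
  have hlim : Tendsto (fun n : ℕ =>
      S * (eLpNorm (fderiv ℝ u) p μ + (M / (n + 1) : ℝ≥0) * eLpNorm u p μ)) atTop
      (𝓝 (S * (eLpNorm (fderiv ℝ u) p μ + (0 : ℝ≥0) * eLpNorm u p μ))) := by
    refine ENNReal.Tendsto.const_mul (tendsto_const_nhds.add ?_) (.inr ENNReal.coe_ne_top)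
    refine ENNReal.Tendsto.mul_const (ENNReal.tendsto_coe.2 ?_) (.inr hup.eLpNorm_ne_top)
    refine NNReal.tendsto_coe.1 ?_
    simpa [Function.comp_def] using (tendsto_const_div_atTop_nhds_zero_nat (M : ℝ)).comp
      (tendsto_add_atTop_nat 1)
  rw [ENNReal.coe_zero, zero_mul, add_zero] at hlim
  calc eLpNorm u p' μ
      ≤ liminf (fun n => eLpNorm (fun x => cutoff n x • u x) p' μ) atTop :=
        Lp.eLpNorm_lim_le_liminf_eLpNorm
          (fun n => ((contDiff_cutoff n).continuous.smul hu.continuous).aestronglyMeasurable) u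
          (ae_of_all _ fun x => tendsto_cutoff_smul x (u x))
    _ ≤ S * eLpNorm (fderiv ℝ u) p μ :=
        (liminf_le_liminf (.of_forall hcutoff)).trans_eq hlim.liminf_eq

theorem memLp_of_memLp_fderiv {u : E → F} (hu : ContDiff ℝ 1 u) {q : ℝ≥0∞} {p p' : ℝ≥0}
    (hq : q ≠ 0) (hqp : q ≤ p) (hp : 1 ≤ p) (hE : 0 < Module.finrank ℝ E)
    (hp' : (p' : ℝ)⁻¹ = (p : ℝ)⁻¹ - (Module.finrank ℝ E : ℝ)⁻¹)
    (huq : MemLp u q μ) (hDu : MemLp (fderiv ℝ u) p μ) : MemLp u p' μ := by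
  obtain ⟨K, hK⟩ := exists_norm_fderiv_truncation_le F
  have hdiff (n : ℕ) : ContDiff ℝ 1 (truncation n ∘ u) := (contDiff_truncation n).comp hu
  have hmem (n : ℕ) : MemLp (truncation n ∘ u) p μ :=
    memLp_of_exponent_le_of_bound hq hqp
      (huq.mono (hdiff n).continuous.aestronglyMeasurable
        (ae_of_all _ fun x => norm_truncation_le n (u x)))
      (C := 2 * (n + 1)) fun x => by exact_mod_cast norm_truncation_le_two_mul n (u x)
  have hderiv (n : ℕ) (x : E) : ‖fderiv ℝ (truncation n ∘ u) x‖ ≤ K * ‖fderiv ℝ u x‖ := by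
    rw [fderiv_comp x ((contDiff_truncation n).differentiable one_ne_zero _)
      (hu.differentiable one_ne_zero x)]
    exact (ContinuousLinearMap.opNorm_comp_le _ _).trans (by gcongr; exact hK n (u x))
  have hbound (n : ℕ) : eLpNorm (truncation n ∘ u) p' μ ≤
      SNormLESNormFDerivOfEqConst F μ p * (ENNReal.ofReal K * eLpNorm (fderiv ℝ u) p μ) :=
    (eLpNorm_le_eLpNorm_fderiv_of_memLp (hdiff n) hp hE hp' (hmem n)).trans <| by
      gcongr
      exact eLpNorm_le_mul_eLpNorm_of_ae_le_mul (ae_of_all _ (hderiv n)) _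
  refine ⟨huq.1, (Lp.eLpNorm_le_of_ae_tendsto (.of_forall hbound)
    (fun n => (hdiff n).continuous.aestronglyMeasurable)
    (ae_of_all _ fun x => tendsto_truncation (u x))).trans_lt ?_⟩
  exact ENNReal.mul_lt_top ENNReal.coe_lt_top (ENNReal.mul_lt_top ENNReal.ofReal_lt_top hDu.2)

end Sobolev

section CubeIntegrability

variable {E F : Type*} [NormedAddCommGroup E] [NormedSpace ℝ E] [NormedAddCommGroup F]
  [InnerProductSpace ℝ F] {u : E → F}

lemma norm_fderiv_norm_sq_le (hu : ContDiff ℝ 1 u) (x : E) :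
    ‖fderiv ℝ (fun y => ‖u y‖ ^ 2) x‖ ≤ 2 * ‖‖u x‖ • fderiv ℝ u x‖ := by
  rw [(hu.differentiable one_ne_zero x).hasFDerivAt.norm_sq.fderiv, ← Nat.cast_smul_eq_nsmul ℝ,
    norm_smul, norm_smul, norm_norm, Nat.cast_ofNat, Real.norm_ofNat]
  gcongr
  exact (ContinuousLinearMap.opNorm_comp_le _ _).trans_eq (by rw [innerSL_apply_norm])

variable [MeasurableSpace E] [BorelSpace E] {μ : Measure E}

lemma memLp_one_fderiv_norm_sq [FiniteDimensional ℝ E] (hu : ContDiff ℝ 1 u) (hu2 : MemLp u 2 μ)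
    (hDu : MemLp (fderiv ℝ u) 2 μ) : MemLp (fderiv ℝ fun x => ‖u x‖ ^ 2) 1 μ :=
  (hDu.smul hu2.norm : MemLp (fun x => ‖u x‖ • fderiv ℝ u x) 1 μ).of_le_mul
    ((hu.norm_sq ℝ).continuous_fderiv one_ne_zero).aestronglyMeasurable
    (ae_of_all _ (norm_fderiv_norm_sq_le hu))

variable [FiniteDimensional ℝ E] [μ.IsAddHaarMeasure]

lemma memLp_four_of_finrank_eq_two (hE : Module.finrank ℝ E = 2) (hu : ContDiff ℝ 1 u)
    (hu2 : MemLp u 2 μ) (hDu : MemLp (fderiv ℝ u) 2 μ) : MemLp u 4 μ := by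
  have hsq : MemLp (fun x => ‖u x‖ ^ 2) 1 μ := (memLp_norm_sq_iff hu2.1).2 (by rwa [mul_one])
  have hsq2 : MemLp (fun x => ‖u x‖ ^ 2) (2 : ℝ≥0) μ :=
    memLp_of_memLp_fderiv (hu.norm_sq ℝ) (p := 1) one_ne_zero le_rfl le_rfl (by lia)
      (by rw [hE]; norm_num) hsq (memLp_one_fderiv_norm_sq hu hu2 hDu)
  convert (memLp_norm_sq_iff hu2.1).1 hsq2
  norm_num

variable [FiniteDimensional ℝ F] {q : ℝ≥0∞}

lemma memLp_three_of_three_le_finrank (h3 : 3 ≤ Module.finrank ℝ E) (h6 : Module.finrank ℝ E ≤ 6)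
    (hu : ContDiff ℝ 1 u) (hq0 : q ≠ 0) (hq2 : q ≤ 2) (huq : MemLp u q μ)
    (hDu : MemLp (fderiv ℝ u) 2 μ) : MemLp u 3 μ := by
  set n := Module.finrank ℝ E
  have hn2 : (0 : ℝ) < n - 2 := sub_pos.2 (by exact_mod_cast h3)
  have hn6 : (n : ℝ) ≤ 6 := by exact_mod_cast h6
  let p' : ℝ≥0 := ⟨2 * n / (n - 2), by positivity⟩
  have hp' : (p' : ℝ)⁻¹ = ((2 : ℝ≥0) : ℝ)⁻¹ - (n : ℝ)⁻¹ := by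
    change (2 * n / (n - 2) : ℝ)⁻¹ = (2 : ℝ)⁻¹ - (n : ℝ)⁻¹
    have : (n : ℝ) ≠ 0 := by positivity
    field_simp
  have h3p' : (3 : ℝ≥0) ≤ p' := by
    change (3 : ℝ) ≤ 2 * n / (n - 2)
    rw [le_div_iff₀ hn2]
    linarith
  exact memLp_of_memLp_of_memLp hq0 (hq2.trans (by norm_num)) (by exact_mod_cast h3p')
    ENNReal.coe_ne_top huq
    (memLp_of_memLp_fderiv hu (p := 2) hq0 hq2 (by norm_num) (by lia) hp' huq hDu)

theorem memLp_three_of_memLp_fderiv [hq : q.HolderConjugate (Module.finrank ℝ E)]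
    (h2 : 2 ≤ Module.finrank ℝ E) (h6 : Module.finrank ℝ E ≤ 6) (hu : ContDiff ℝ 1 u)
    (huq : MemLp u q μ) (hDu : MemLp (fderiv ℝ u) 2 μ) : MemLp u 3 μ := by
  rcases h2.eq_or_lt with hE | h3
  · have hq_eq : q = 2 := by
      rw [← hE, Nat.cast_ofNat] at hq
      have := hq.symm
      exact ENNReal.HolderConjugate.unique 2 q 2
    subst hq_eq
    exact memLp_of_memLp_of_memLp two_ne_zero (by norm_num) (by norm_num) (by norm_num) huq
      (memLp_four_of_finrank_eq_two hE.symm hu huq hDu)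
  · exact memLp_three_of_three_le_finrank h3 h6 hu hq.ne_zero (holderConjugate_natCast_le_two h2)
      huq hDu

end CubeIntegrability

section VectorCalculus

variable {N : ℕ} {f g : EuclideanSpace ℝ (Fin N) → ℝ}
  {v w : EuclideanSpace ℝ (Fin N) → EuclideanSpace ℝ (Fin N)} {x : EuclideanSpace ℝ (Fin N)}

lemma fderiv_apply_eq_sum_pd (f : EuclideanSpace ℝ (Fin N) → ℝ)
    (x h : EuclideanSpace ℝ (Fin N)) : fderiv ℝ f x h = ∑ j, h j * pd N f j x := by
  conv_lhs => rw [← (EuclideanSpace.basisFun (Fin N) ℝ).sum_repr h]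
  simp only [map_sum, map_smul, EuclideanSpace.basisFun_repr, EuclideanSpace.basisFun_apply,
    smul_eq_mul, pd]

lemma continuous_pd (hf : ContDiff ℝ 1 f) (j : Fin N) : Continuous (pd N f j) :=
  (hf.continuous_fderiv one_ne_zero).clm_apply continuous_const

lemma contDiff_component {n : WithTop ℕ∞} (hv : ContDiff ℝ n v) (j : Fin N) :
    ContDiff ℝ n fun x => v x j :=
  contDiff_euclidean.1 hv j

lemma differentiableAt_component (hv : DifferentiableAt ℝ v x) (i : Fin N) :
    DifferentiableAt ℝ (fun y => v y i) x :=
  differentiableAt_euclidean.1 hv i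

lemma pd_add (hf : DifferentiableAt ℝ f x) (hg : DifferentiableAt ℝ g x) (j : Fin N) :
    pd N (fun y => f y + g y) j x = pd N f j x + pd N g j x := by
  rw [pd, fderiv_fun_add hf hg, add_apply, pd, pd]

lemma pd_mul (hf : DifferentiableAt ℝ f x) (hg : DifferentiableAt ℝ g x) (j : Fin N) :
    pd N (fun y => f y * g y) j x = f x * pd N g j x + pd N f j x * g x := by
  rw [pd, fderiv_fun_mul hf hg, add_apply, smul_apply, smul_apply, smul_eq_mul, smul_eq_mul,
    mul_comm (g x), pd, pd]

lemma pd_const_mul (c : ℝ) (hf : DifferentiableAt ℝ f x) (j : Fin N) :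
    pd N (fun y => c * f y) j x = c * pd N f j x := by
  rw [pd, fderiv_const_mul hf, smul_apply, smul_eq_mul, pd]

lemma pd_sum {ι : Type*} (s : Finset ι) {f : ι → EuclideanSpace ℝ (Fin N) → ℝ}
    (hf : ∀ i ∈ s, DifferentiableAt ℝ (f i) x) (j : Fin N) :
    pd N (fun y => ∑ i ∈ s, f i y) j x = ∑ i ∈ s, pd N (f i) j x := by
  rw [pd, fderiv_fun_sum hf, sum_apply]
  rfl

lemma contDiff_pd {n : WithTop ℕ∞} (hf : ContDiff ℝ (n + 1) f) (j : Fin N) :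
    ContDiff ℝ n (pd N f j) :=
  (hf.fderiv_right le_rfl).clm_apply contDiff_const

lemma contDiff_divV {n : WithTop ℕ∞} (hv : ContDiff ℝ (n + 1) v) : ContDiff ℝ n (divV N v) :=
  ContDiff.sum fun j _ => contDiff_pd (contDiff_component hv j) j

lemma divV_add (hv : DifferentiableAt ℝ v x) (hw : DifferentiableAt ℝ w x) :
    divV N (v + w) x = divV N v x + divV N w x := by
  simp only [divV, Pi.add_apply, PiLp.add_apply, ← Finset.sum_add_distrib]
  exact Finset.sum_congr rfl fun j _ =>
    pd_add (differentiableAt_component hv j) (differentiableAt_component hw j) j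

lemma divV_smul (hf : DifferentiableAt ℝ f x) (hv : DifferentiableAt ℝ v x) :
    divV N (f • v) x = f x * divV N v x + fderiv ℝ f x (v x) := by
  simp only [divV, fderiv_apply_eq_sum_pd f, Pi.smul_apply', PiLp.smul_apply, smul_eq_mul,
    Finset.mul_sum, ← Finset.sum_add_distrib, mul_comm (v x _)]
  exact Finset.sum_congr rfl fun j _ => pd_mul hf (differentiableAt_component hv j) j

lemma divV_const_smul (c : ℝ) (hv : DifferentiableAt ℝ v x) :
    divV N (c • v) x = c * divV N v x :=
  (divV_smul (differentiableAt_const c) hv).trans <| by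
    rw [fderiv_const_apply, zero_apply, add_zero]

lemma gradient_component (f : EuclideanSpace ℝ (Fin N) → ℝ) (x : EuclideanSpace ℝ (Fin N))
    (j : Fin N) : gradient f x j = pd N f j x := by
  rw [pd, ← inner_gradient_left, EuclideanSpace.inner_single_right]
  simp

lemma divV_gradient (f : EuclideanSpace ℝ (Fin N) → ℝ) : divV N (gradient f) = lap N f := by
  simp only [funext_iff, divV, lap, gradient_component, implies_true]

lemma contDiff_gradient {n : WithTop ℕ∞} (hf : ContDiff ℝ (n + 1) f) :
    ContDiff ℝ n (gradient f) :=
  contDiff_euclidean.2 fun j => by simpa only [gradient_component] using contDiff_pd hf j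

/-- The squared Frobenius norm `|∇v|² = ∑ᵢⱼ (∂ⱼvᵢ)²` of the Jacobian matrix, that is, the density
of the Dirichlet energy of the vector field `v`. -/
def gradSq (N : ℕ) (v : EuclideanSpace ℝ (Fin N) → EuclideanSpace ℝ (Fin N))
    (x : EuclideanSpace ℝ (Fin N)) : ℝ :=
  ∑ i, ∑ j, pd N (fun y => v y i) j x ^ 2

lemma gradSq_nonneg (v : EuclideanSpace ℝ (Fin N) → EuclideanSpace ℝ (Fin N))
    (x : EuclideanSpace ℝ (Fin N)) : 0 ≤ gradSq N v x :=
  Finset.sum_nonneg fun _ _ => Finset.sum_nonneg fun _ _ => sq_nonneg _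

lemma continuous_gradSq (hv : ContDiff ℝ 1 v) : Continuous (gradSq N v) :=
  continuous_finsetSum _ fun i _ => continuous_finsetSum _ fun j _ =>
    (continuous_pd (contDiff_component hv i) j).pow 2

lemma opNorm_sq_le_sum_norm_sq {ι E F : Type*} [Fintype ι] [NormedAddCommGroup E]
    [InnerProductSpace ℝ E] [NormedAddCommGroup F] [NormedSpace ℝ F] (b : OrthonormalBasis ι ℝ E)
    (L : E →L[ℝ] F) : ‖L‖ ^ 2 ≤ ∑ j, ‖L (b j)‖ ^ 2 := by
  refine (Real.le_sqrt (norm_nonneg L) (Finset.sum_nonneg fun _ _ => sq_nonneg _)).1 <|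
    L.opNorm_le_bound (Real.sqrt_nonneg _) fun y => ?_
  calc ‖L y‖ = ‖∑ j, b.repr y j • L (b j)‖ := by
        conv_lhs => rw [← b.sum_repr y, map_sum]
        simp only [map_smul]
    _ ≤ ∑ j, ‖L (b j)‖ * ‖b.repr y j‖ :=
        (norm_sum_le _ _).trans_eq (by simp only [norm_smul, mul_comm])
    _ ≤ √(∑ j, ‖L (b j)‖ ^ 2) * √(∑ j, ‖b.repr y j‖ ^ 2) := Real.sum_mul_le_sqrt_mul_sqrt _ _ _
    _ = √(∑ j, ‖L (b j)‖ ^ 2) * ‖y‖ := by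
        rw [← EuclideanSpace.norm_eq, LinearIsometryEquiv.norm_map]

lemma fderiv_single_component (hv : DifferentiableAt ℝ v x) (i j : Fin N) :
    fderiv ℝ v x (EuclideanSpace.single j 1) i = pd N (fun y => v y i) j x := by
  have hcomp : HasFDerivAt (fun y => v y i) (EuclideanSpace.proj i ∘L fderiv ℝ v x) x :=
    (EuclideanSpace.proj i : EuclideanSpace ℝ (Fin N) →L[ℝ] ℝ).hasFDerivAt.comp x hv.hasFDerivAt
  rw [pd, hcomp.fderiv]
  rfl

lemma norm_fderiv_sq_le_gradSq (hv : DifferentiableAt ℝ v x) :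
    ‖fderiv ℝ v x‖ ^ 2 ≤ gradSq N v x := by
  refine (opNorm_sq_le_sum_norm_sq (EuclideanSpace.basisFun (Fin N) ℝ) _).trans_eq ?_
  simp only [EuclideanSpace.basisFun_apply, EuclideanSpace.real_norm_sq_eq,
    fderiv_single_component hv]
  exact Finset.sum_comm

lemma norm_divV_le (hv : DifferentiableAt ℝ v x) : ‖divV N v x‖ ≤ N * ‖fderiv ℝ v x‖ := by
  refine (norm_sum_le_of_le _ fun j _ => ?_).trans_eq (b := ∑ _ : Fin N, ‖fderiv ℝ v x‖) (by simp)
  rw [← fderiv_single_component hv]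
  refine (PiLp.norm_apply_le _ j).trans <| ((fderiv ℝ v x).le_opNorm _).trans_eq ?_
  rw [PiLp.norm_single, norm_one, mul_one]

lemma pd_norm_sq (hv : DifferentiableAt ℝ v x) (j : Fin N) :
    pd N (fun y => ‖v y‖ ^ 2) j x = 2 * ∑ i, v x i * pd N (fun y => v y i) j x := by
  have hvi (i : Fin N) := differentiableAt_component hv i
  simp only [EuclideanSpace.real_norm_sq_eq]
  rw [pd_sum _ fun i _ => (hvi i).fun_pow 2, Finset.mul_sum]
  refine Finset.sum_congr rfl fun i _ => ?_
  simp only [pow_two, pd_mul (hvi i) (hvi i)]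
  ring

lemma fderiv_norm_sq_apply_eq_sum (hv : DifferentiableAt ℝ v x) (h : EuclideanSpace ℝ (Fin N)) :
    fderiv ℝ (fun y => ‖v y‖ ^ 2) x h = 2 * ∑ i, v x i * fderiv ℝ (fun y => v y i) x h := by
  simp only [fderiv_apply_eq_sum_pd _ x h, pd_norm_sq hv, Finset.mul_sum]
  rw [Finset.sum_comm]
  exact Finset.sum_congr rfl fun i _ => Finset.sum_congr rfl fun j _ => by ring

lemma lap_norm_sq (hv : ContDiff ℝ 2 v) (x : EuclideanSpace ℝ (Fin N)) :
    lap N (fun y => ‖v y‖ ^ 2) x = 2 * (gradSq N v x + ∑ i, v x i * lap N (fun y => v y i) x) := by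
  have hvi (i : Fin N) : Differentiable ℝ fun y => v y i :=
    (contDiff_component hv i).differentiable two_ne_zero
  have hvij (i j : Fin N) : Differentiable ℝ (pd N (fun y => v y i) j) :=
    (contDiff_pd (n := 1) (contDiff_component hv i) j).differentiable one_ne_zero
  have hpd (j : Fin N) : pd N (fun y => ‖v y‖ ^ 2) j =
      fun y => 2 * ∑ i, v y i * pd N (fun z => v z i) j y :=
    funext fun y => pd_norm_sq (hv.differentiable two_ne_zero y) j
  have hpd_pd (j : Fin N) : pd N (pd N (fun y => ‖v y‖ ^ 2) j) j x = 2 * ∑ i,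
      (pd N (fun y => v y i) j x ^ 2 + v x i * pd N (pd N (fun y => v y i) j) j x) := by
    rw [hpd, pd_const_mul _ (.fun_sum fun i _ => ((hvi i).fun_mul (hvij i j)) x),
      pd_sum _ fun i _ => ((hvi i).fun_mul (hvij i j)) x]
    congr 1
    refine Finset.sum_congr rfl fun i _ => ?_
    rw [pd_mul (hvi i x) (hvij i j x)]
    ring
  simp only [lap, hpd_pd, gradSq]
  rw [← Finset.mul_sum, Finset.sum_comm]
  simp only [Finset.sum_add_distrib, Finset.mul_sum]

end VectorCalculus

section DivergenceIntegral

lemma tendsto_eLpNorm_indicator_zero {α F : Type*} {m : MeasurableSpace α} {μ : Measure α}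
    [NormedAddCommGroup F] {f : α → F} {p : ℝ≥0∞} (hp : p ≠ ∞) (hf : MemLp f p μ) {s : ℕ → Set α}
    (hs : ∀ n, MeasurableSet (s n)) (hlim : ∀ x, ∀ᶠ n in atTop, x ∉ s n) :
    Tendsto (fun n => eLpNorm ((s n).indicator f) p μ) atTop (𝓝 0) := by
  rcases eq_or_ne p 0 with rfl | hp0
  · simp only [eLpNorm_exponent_zero, tendsto_const_nhds]
  have hp_pos : 0 < p.toReal := ENNReal.toReal_pos hp0 hp
  simp only [eLpNorm_eq_lintegral_rpow_enorm_toReal hp0 hp]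
  have hint : Tendsto (fun n => ∫⁻ x, ‖(s n).indicator f x‖ₑ ^ p.toReal ∂μ) atTop
      (𝓝 (∫⁻ _, 0 ∂μ)) := by
    refine tendsto_lintegral_of_dominated_convergence' (fun x => ‖f x‖ₑ ^ p.toReal)
      (fun n => (hf.1.indicator (hs n)).enorm.pow_const _) (fun n => ae_of_all _ fun x => ?_)
      (lintegral_rpow_enorm_lt_top_of_eLpNorm_lt_top hp0 hp hf.2).ne (ae_of_all _ fun x => ?_)
    · exact ENNReal.rpow_le_rpow (enorm_indicator_le_enorm_self f x) hp_pos.le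
    · refine tendsto_nhds_of_eventually_eq ((hlim x).mono fun n hn => ?_)
      rw [Set.indicator_of_notMem hn, enorm_zero, ENNReal.zero_rpow_of_pos hp_pos]
  rw [lintegral_zero] at hint
  simpa [hp_pos] using hint.ennrpow_const (1 / p.toReal)

section Haar

variable {E : Type*} [NormedAddCommGroup E] [NormedSpace ℝ E] [FiniteDimensional ℝ E]
  [MeasurableSpace E] {μ : Measure E}

lemma eLpNorm_fderiv_cutoff_le {q : ℝ≥0∞} {M : ℝ≥0} {n : ℕ}
    (hM : ∀ x : E, ‖fderiv ℝ (cutoff n) x‖ ≤ M / (n + 1)) :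
    eLpNorm (fderiv ℝ (cutoff n : E → ℝ)) q μ ≤
      μ (Metric.closedBall 0 (2 * (n + 1))) ^ q.toReal⁻¹ * ENNReal.ofReal (M / (n + 1)) := by
  have hsupp := support_fderiv_cutoff_subset (E := E) n
  rw [← eLpNorm_restrict_eq_of_support_subset (f := fderiv ℝ (cutoff n : E → ℝ)) hsupp]
  refine (eLpNorm_le_of_ae_bound (ae_of_all _ hM)).trans_eq ?_
  rw [Measure.restrict_apply_univ]

variable [BorelSpace E]

lemma tendsto_integral_cutoff_smul {F : Type*} [NormedAddCommGroup F] [NormedSpace ℝ F]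
    {g : E → F} (hg : Integrable g μ) :
    Tendsto (fun n => ∫ x, cutoff n x • g x ∂μ) atTop (𝓝 (∫ x, g x ∂μ)) :=
  tendsto_integral_of_dominated_convergence (fun x => ‖g x‖)
    (fun n => (contDiff_cutoff n).continuous.aestronglyMeasurable.smul hg.1) hg.norm
    (fun n => ae_of_all _ fun x => by
      rw [norm_smul]
      exact mul_le_of_le_one_left (norm_nonneg _) (norm_cutoff_le_one n x))
    (ae_of_all _ fun x => tendsto_cutoff_smul x (g x))

variable [μ.IsAddHaarMeasure]

lemma measure_closedBall_rpow_le {r R : ℝ} (hr : 0 ≤ r) (hdr : Module.finrank ℝ E * r ≤ 1)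
    (hR : 1 ≤ R) :
    μ (Metric.closedBall 0 R) ^ r ≤ ENNReal.ofReal R * μ (Metric.ball 0 1) ^ r := by
  have hR0 : 0 < R := one_pos.trans_le hR
  rw [Measure.addHaar_closedBall μ 0 hR0.le, ENNReal.mul_rpow_of_nonneg _ _ hr,
    ENNReal.ofReal_rpow_of_pos (by positivity), ← Real.rpow_natCast_mul hR0.le]
  gcongr
  exact (Real.rpow_le_rpow_of_exponent_le hR hdr).trans_eq (Real.rpow_one R)

lemma exists_eLpNorm_fderiv_cutoff_le {q : ℝ≥0∞} (hq : (Module.finrank ℝ E : ℝ≥0∞) ≤ q) :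
    ∃ C : ℝ≥0∞, C ≠ ∞ ∧ ∀ n, eLpNorm (fderiv ℝ (cutoff n : E → ℝ)) q μ ≤ C := by
  obtain ⟨M, hM⟩ := exists_norm_fderiv_cutoff_le E
  have hr : 0 ≤ q.toReal⁻¹ := inv_nonneg.2 ENNReal.toReal_nonneg
  refine ⟨ENNReal.ofReal (2 * M) * μ (Metric.ball 0 1) ^ q.toReal⁻¹, ENNReal.mul_ne_top
    ENNReal.ofReal_ne_top (ENNReal.rpow_ne_top_of_nonneg hr measure_ball_lt_top.ne), fun n => ?_⟩
  have hR : (1 : ℝ) ≤ 2 * (n + 1) := by linarith [n.cast_nonneg (α := ℝ)]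
  have hscale : 2 * ((n : ℝ) + 1) * (M / (n + 1)) = 2 * M := by field_simp
  refine (eLpNorm_fderiv_cutoff_le (hM n)).trans ?_
  rw [← hscale, ENNReal.ofReal_mul (zero_le_one.trans hR), mul_right_comm]
  gcongr
  exact measure_closedBall_rpow_le hr (natCast_mul_inv_toReal_le_one hq) hR

lemma tendsto_eLpNorm_fderiv_cutoff_apply_zero {p q : ℝ≥0∞} [q.HolderConjugate p] (hp : p ≠ ∞)
    (hq : (Module.finrank ℝ E : ℝ≥0∞) ≤ q) {F : E → E} (hF : MemLp F p μ) :
    Tendsto (fun n => eLpNorm (fun x => fderiv ℝ (cutoff n) x (F x)) 1 μ) atTop (𝓝 0) := by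
  obtain ⟨C, hC_top, hC⟩ := exists_eLpNorm_fderiv_cutoff_le (μ := μ) hq
  let s (n : ℕ) : Set E := {x | n + 1 ≤ ‖x‖}
  have hs (n : ℕ) : MeasurableSet (s n) := measurableSet_le measurable_const measurable_norm
  have htail : Tendsto (fun n => eLpNorm ((s n).indicator F) p μ) atTop (𝓝 0) :=
    tendsto_eLpNorm_indicator_zero hp hF hs fun x =>
      (eventually_lt_natCast_add_one ‖x‖).mono fun _ hn => not_le.2 hn
  have happly (n : ℕ) (x : E) :
      fderiv ℝ (cutoff n) x (F x) = fderiv ℝ (cutoff n) x ((s n).indicator F x) := by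
    by_cases hx : x ∈ s n
    · rw [Set.indicator_of_mem hx]
    · rw [fderiv_cutoff_eq_zero_of_norm_lt (not_le.1 hx)]
      simp only [zero_apply]
  have hbound (n : ℕ) : eLpNorm (fun x => fderiv ℝ (cutoff n) x (F x)) 1 μ ≤
      C * eLpNorm ((s n).indicator F) p μ := by
    simp only [happly n]
    refine (eLpNorm_le_eLpNorm_mul_eLpNorm'_of_norm (p := q) (q := p)
      ((contDiff_cutoff n).continuous_fderiv one_ne_zero).aestronglyMeasurable
      (hF.1.indicator (hs n)) (fun L y => L y) 1 (ae_of_all _ fun x => ?_)).trans ?_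
    · rw [NNReal.coe_one, one_mul]
      exact ContinuousLinearMap.le_opNorm _ _
    · rw [ENNReal.coe_one, one_mul]
      gcongr
      exact hC n
  refine tendsto_of_tendsto_of_tendsto_of_le_of_le tendsto_const_nhds ?_ (fun n => zero_le) hbound
  simpa using ENNReal.Tendsto.const_mul htail (.inr hC_top)

lemma tendsto_integral_fderiv_cutoff_apply_add_zero {p q : ℝ≥0∞} [q.HolderConjugate p] (hp : p ≠ ∞)
    (hq : (Module.finrank ℝ E : ℝ≥0∞) ≤ q) {F₁ F₂ : E → E} (hF₁ : MemLp F₁ p μ)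
    (hF₂ : MemLp F₂ 1 μ) :
    Tendsto (fun n => ∫ x, fderiv ℝ (cutoff n) x (F₁ x + F₂ x) ∂μ) atTop (𝓝 0) := by
  have hmeas {G : E → E} (hG : AEStronglyMeasurable G μ) (n : ℕ) :
      AEStronglyMeasurable (fun x => fderiv ℝ (cutoff n) x (G x)) μ :=
    isBoundedBilinearMap_apply.continuous.comp_aestronglyMeasurable
      (((contDiff_cutoff n).continuous_fderiv one_ne_zero).aestronglyMeasurable.prodMk hG)
  have hsum := (tendsto_eLpNorm_fderiv_cutoff_apply_zero hp hq hF₁).add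
    (tendsto_eLpNorm_fderiv_cutoff_apply_zero ENNReal.one_ne_top (q := ∞) le_top hF₂)
  rw [add_zero] at hsum
  refine tendsto_zero_iff_enorm_tendsto_zero.2 <|
    tendsto_of_tendsto_of_tendsto_of_le_of_le tendsto_const_nhds hsum (fun n => zero_le) fun n => ?_
  calc ‖∫ x, fderiv ℝ (cutoff n) x (F₁ x + F₂ x) ∂μ‖ₑ
      ≤ ∫⁻ x, ‖fderiv ℝ (cutoff n) x (F₁ x + F₂ x)‖ₑ ∂μ := enorm_integral_le_lintegral_enorm _
    _ = eLpNorm ((fun x => fderiv ℝ (cutoff n) x (F₁ x)) +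
          fun x => fderiv ℝ (cutoff n) x (F₂ x)) 1 μ := by
        simp only [eLpNorm_one_eq_lintegral_enorm, Pi.add_apply, map_add]
    _ ≤ _ := eLpNorm_add_le (hmeas hF₁.1 n) (hmeas hF₂.1 n) le_rfl

end Haar

variable {N : ℕ}

lemma integral_mul_divV_eq_neg {F : EuclideanSpace ℝ (Fin N) → EuclideanSpace ℝ (Fin N)}
    {σ : EuclideanSpace ℝ (Fin N) → ℝ} (hF : ContDiff ℝ 1 F) (hσ : ContDiff ℝ 1 σ)
    (hσc : HasCompactSupport σ) : ∫ x, σ x * divV N F x = -∫ x, fderiv ℝ σ x (F x) := by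
  have hFj (j : Fin N) : ContDiff ℝ 1 fun x => F x j := contDiff_component hF j
  have hint_right (j : Fin N) : Integrable fun x => σ x * pd N (fun y => F y j) j x :=
    (hσ.continuous.mul (continuous_pd (hFj j) j)).integrable_of_hasCompactSupport hσc.mul_right
  have hint_left (j : Fin N) : Integrable fun x => pd N σ j x * F x j :=
    ((continuous_pd hσ j).mul (hFj j).continuous).integrable_of_hasCompactSupport
      (hσc.fderiv_apply (𝕜 := ℝ) _).mul_right
  simp only [divV, Finset.mul_sum, fderiv_apply_eq_sum_pd σ, mul_comm (F _ _)]
  rw [integral_finsetSum _ fun j _ => hint_right j, integral_finsetSum _ fun j _ => hint_left j,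
    ← Finset.sum_neg_distrib]
  refine Finset.sum_congr rfl fun j _ => ?_
  exact integral_mul_fderiv_eq_neg_fderiv_mul_of_integrable (hint_left j) (hint_right j)
    ((hσ.continuous.mul (hFj j).continuous).integrable_of_hasCompactSupport hσc.mul_right)
    (fun x _ => hσ.differentiable one_ne_zero x) (fun x _ => (hFj j).differentiable one_ne_zero x)

theorem integral_divV_eq_zero {F₁ F₂ : EuclideanSpace ℝ (Fin N) → EuclideanSpace ℝ (Fin N)}
    {p : ℝ≥0∞} [hpN : p.HolderConjugate N] (hp : p ≠ ∞) (hF₁ : MemLp F₁ p volume)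
    (hF₂ : MemLp F₂ 1 volume) (hF : ContDiff ℝ 1 (F₁ + F₂))
    (hdiv : Integrable (divV N (F₁ + F₂))) : ∫ x, divV N (F₁ + F₂) x = 0 := by
  have hparts (n : ℕ) : ∫ x, cutoff n x • divV N (F₁ + F₂) x =
      -∫ x, fderiv ℝ (cutoff n) x (F₁ x + F₂ x) :=
    integral_mul_divV_eq_neg hF (contDiff_cutoff n) (hasCompactSupport_cutoff n)
  have := hpN.symm
  have hflux := (tendsto_integral_fderiv_cutoff_apply_add_zero hp (q := N)
    (by rw [finrank_euclideanSpace_fin]) hF₁ hF₂).neg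
  rw [neg_zero] at hflux
  exact tendsto_nhds_unique (tendsto_integral_cutoff_smul hdiv) (by simpa only [hparts] using hflux)

end DivergenceIntegral

section EnergyIdentity

variable {N : ℕ} {ρ Φ : EuclideanSpace ℝ (Fin N) → ℝ}
  {v : EuclideanSpace ℝ (Fin N) → EuclideanSpace ℝ (Fin N)} {x : EuclideanSpace ℝ (Fin N)} {γ : ℝ}

lemma divV_smul_smul_of_divV_eq_zero {f : EuclideanSpace ℝ (Fin N) → ℝ}
    (hf : DifferentiableAt ℝ f x) (hρ : DifferentiableAt ℝ ρ x) (hv : DifferentiableAt ℝ v x)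
    (hcont : divV N (ρ • v) x = 0) :
    divV N (f • ρ • v) x = fderiv ℝ f x (ρ x • v x) := by
  rw [divV_smul hf (hρ.smul hv), hcont, mul_zero, zero_add, Pi.smul_apply']

-- The factor `γ / (γ - 1)` turns `v · ∇ρ^γ`, the power of the pressure force, into a divergence.
lemma mul_divV_rpow_smul_of_divV_eq_zero (hγ : 1 ≤ γ) (hρ : DifferentiableAt ℝ ρ x)
    (hv : DifferentiableAt ℝ v x) (hρx : 0 ≤ ρ x) (hcont : divV N (ρ • v) x = 0) :
    γ * divV N ((fun y => ρ y ^ γ) • v) x = (γ - 1) * fderiv ℝ (fun y => ρ y ^ γ) x (v x) := by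
  have hfderiv : fderiv ℝ (fun y => ρ y ^ γ) x (v x) = γ * ρ x ^ (γ - 1) * fderiv ℝ ρ x (v x) := by
    rw [(hρ.hasFDerivAt.rpow_const (.inr hγ)).fderiv, smul_apply, smul_eq_mul]
  have hrpow : ρ x ^ γ = ρ x ^ (γ - 1) * ρ x := by
    rw [← Real.rpow_add_one' hρx (by linarith), sub_add_cancel]
  rw [divV_smul hρ hv] at hcont
  rw [divV_smul (hρ.rpow_const (.inr hγ)) hv, hfderiv, hrpow]
  linear_combination γ * ρ x ^ (γ - 1) * hcont

/-- The part of the flux of mechanical energy that is a bounded multiple of the velocity: the work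
of the force `kρ∇Φ` and of the pressure `aρ^γ`, whose enthalpy is `aγ/(γ - 1) ρ^(γ - 1)`. The
enthalpy is multiplied out with `ρ` because `ρ^(γ - 1)` may fail to be differentiable where `ρ`
vanishes. -/
def potentialFlux (k a γ : ℝ) (ρ Φ : EuclideanSpace ℝ (Fin N) → ℝ)
    (v : EuclideanSpace ℝ (Fin N) → EuclideanSpace ℝ (Fin N)) :
    EuclideanSpace ℝ (Fin N) → EuclideanSpace ℝ (Fin N) :=
  k • (Φ • ρ • v) + (-(a * γ / (γ - 1))) • ((fun x => ρ x ^ γ) • v)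

/-- The part of the flux of mechanical energy that is an integrable vector field: viscous work with
coefficients `μ` and `ν = μ + λ`, and transport of the kinetic energy `ρ|v|²/2`. -/
def viscousKineticFlux (μ ν : ℝ) (ρ : EuclideanSpace ℝ (Fin N) → ℝ)
    (v : EuclideanSpace ℝ (Fin N) → EuclideanSpace ℝ (Fin N)) :
    EuclideanSpace ℝ (Fin N) → EuclideanSpace ℝ (Fin N) :=
  (μ / 2) • gradient (fun x => ‖v x‖ ^ 2) + (ν • (divV N v • v) +
    (-2⁻¹ : ℝ) • ((fun x => ‖v x‖ ^ 2) • ρ • v))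

lemma contDiff_potentialFlux (k a : ℝ) (hγ : 1 ≤ γ) (hρ : ContDiff ℝ 1 ρ) (hΦ : ContDiff ℝ 1 Φ)
    (hv : ContDiff ℝ 1 v) : ContDiff ℝ 1 (potentialFlux k a γ ρ Φ v) :=
  have hρ_rpow : ContDiff ℝ 1 fun x => ρ x ^ γ :=
    hρ.rpow_const_of_le (m := 1) (by exact_mod_cast hγ)
  ((hΦ.smul (hρ.smul hv)).const_smul k).add ((hρ_rpow.smul hv).const_smul (-(a * γ / (γ - 1))))

lemma contDiff_viscousKineticFlux (μ ν : ℝ) (hρ : ContDiff ℝ 1 ρ) (hv : ContDiff ℝ 2 v) :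
    ContDiff ℝ 1 (viscousKineticFlux μ ν ρ v) := by
  have hv₁ : ContDiff ℝ 1 v := hv.of_le one_le_two
  exact ((contDiff_gradient (n := 1) (hv.norm_sq ℝ)).const_smul (μ / 2)).add <|
    (((contDiff_divV (n := 1) hv).smul hv₁).const_smul ν).add
      (((hv₁.norm_sq ℝ).smul (hρ.smul hv₁)).const_smul (-2⁻¹ : ℝ))

lemma divV_potentialFlux (k a : ℝ) (hγ : 1 < γ) (hρ : DifferentiableAt ℝ ρ x)
    (hΦ : DifferentiableAt ℝ Φ x) (hv : DifferentiableAt ℝ v x) (hρx : 0 ≤ ρ x)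
    (hcont : divV N (ρ • v) x = 0) :
    divV N (potentialFlux k a γ ρ Φ v) x =
      k * ρ x * fderiv ℝ Φ x (v x) - a * fderiv ℝ (fun y => ρ y ^ γ) x (v x) := by
  have hγ_sub : γ - 1 ≠ 0 := (sub_pos.2 hγ).ne'
  have hpressure := mul_divV_rpow_smul_of_divV_eq_zero hγ.le hρ hv hρx hcont
  have hforce : DifferentiableAt ℝ (Φ • ρ • v) x := hΦ.smul (hρ.smul hv)
  have hwork : DifferentiableAt ℝ ((fun y => ρ y ^ γ) • v) x :=
    (hρ.rpow_const (.inr hγ.le)).smul hv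
  calc divV N (potentialFlux k a γ ρ Φ v) x
      = divV N (k • (Φ • ρ • v)) x +
          divV N ((-(a * γ / (γ - 1))) • ((fun y => ρ y ^ γ) • v)) x :=
        divV_add (hforce.const_smul k) (hwork.const_smul _)
    _ = k * fderiv ℝ Φ x (ρ x • v x) - a / (γ - 1) * (γ * divV N ((fun y => ρ y ^ γ) • v) x) := by
        rw [divV_const_smul k hforce, divV_const_smul _ hwork,
          divV_smul_smul_of_divV_eq_zero hΦ hρ hv hcont]
        ring
    _ = _ := by
        rw [hpressure, map_smul, smul_eq_mul]
        field_simp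

lemma divV_viscousKineticFlux (μ ν : ℝ) (hρ : DifferentiableAt ℝ ρ x) (hv : ContDiff ℝ 2 v)
    (hcont : divV N (ρ • v) x = 0) :
    divV N (viscousKineticFlux μ ν ρ v) x =
      μ * (gradSq N v x + ∑ i, v x i * lap N (fun y => v y i) x) +
        ν * (divV N v x ^ 2 + fderiv ℝ (divV N v) x (v x)) -
        ∑ i, v x i * fderiv ℝ (fun y => v y i) x (ρ x • v x) := by
  have hvx : DifferentiableAt ℝ v x := hv.differentiable two_ne_zero x
  have hsq : DifferentiableAt ℝ (fun y => ‖v y‖ ^ 2) x := hvx.norm_sq ℝ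
  have hgrad : DifferentiableAt ℝ (gradient fun y => ‖v y‖ ^ 2) x :=
    (contDiff_gradient (n := 1) (hv.norm_sq ℝ)).differentiable one_ne_zero x
  have hdiv : DifferentiableAt ℝ (divV N v) x :=
    (contDiff_divV (n := 1) hv).differentiable one_ne_zero x
  have hdilation : DifferentiableAt ℝ (divV N v • v) x := hdiv.smul hvx
  have hkinetic : DifferentiableAt ℝ ((fun y => ‖v y‖ ^ 2) • ρ • v) x := hsq.smul (hρ.smul hvx)
  calc divV N (viscousKineticFlux μ ν ρ v) x
      = divV N ((μ / 2) • gradient fun y => ‖v y‖ ^ 2) x + (divV N (ν • (divV N v • v)) x +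
          divV N ((-2⁻¹ : ℝ) • ((fun y => ‖v y‖ ^ 2) • ρ • v)) x) := by
        rw [← divV_add (hdilation.const_smul ν) (hkinetic.const_smul _)]
        exact divV_add (hgrad.const_smul _)
          ((hdilation.const_smul ν).add (hkinetic.const_smul _))
    _ = μ / 2 * lap N (fun y => ‖v y‖ ^ 2) x +
          (ν * (divV N v x * divV N v x + fderiv ℝ (divV N v) x (v x)) +
            -2⁻¹ * fderiv ℝ (fun y => ‖v y‖ ^ 2) x (ρ x • v x)) := by
        rw [divV_const_smul _ hgrad, divV_gradient, divV_const_smul ν hdilation,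
          divV_smul hdiv hvx, divV_const_smul _ hkinetic,
          divV_smul_smul_of_divV_eq_zero hsq hρ hvx hcont]
    _ = _ := by
        rw [lap_norm_sq hv, fderiv_norm_sq_apply_eq_sum hvx]
        ring

lemma divV_energyFlux {k a μ ν : ℝ} (hγ : 1 < γ) (hρ : ContDiff ℝ 1 ρ) (hΦ : ContDiff ℝ 1 Φ)
    (hv : ContDiff ℝ 2 v) (hρx : 0 ≤ ρ x) (hcont : divV N (ρ • v) x = 0)
    (hmom : ∀ i, ∑ j, pd N (fun y => ρ y * v y j * v y i) j x =
      -pd N (fun y => a * ρ y ^ γ) i x + k * ρ x * pd N Φ i x +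
        μ * lap N (fun y => v y i) x + ν * pd N (divV N v) i x) :
    divV N (potentialFlux k a γ ρ Φ v + viscousKineticFlux μ ν ρ v) x =
      μ * gradSq N v x + ν * divV N v x ^ 2 := by
  have hρx_diff : DifferentiableAt ℝ ρ x := hρ.differentiable one_ne_zero x
  have hvx : DifferentiableAt ℝ v x := hv.differentiable two_ne_zero x
  have hconvection (i : Fin N) : fderiv ℝ (fun y => v y i) x (ρ x • v x) =
      ∑ j, pd N (fun y => ρ y * v y j * v y i) j x := by
    rw [← divV_smul_smul_of_divV_eq_zero (differentiableAt_component hvx i) hρx_diff hvx hcont]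
    simp only [divV, Pi.smul_apply', PiLp.smul_apply, smul_eq_mul, mul_comm]
  have hpressure (i : Fin N) :
      pd N (fun y => a * ρ y ^ γ) i x = a * pd N (fun y => ρ y ^ γ) i x :=
    pd_const_mul a (hρx_diff.rpow_const (.inr hγ.le)) i
  have hpower : ∑ i, v x i * fderiv ℝ (fun y => v y i) x (ρ x • v x) =
      -(a * fderiv ℝ (fun y => ρ y ^ γ) x (v x)) + k * ρ x * fderiv ℝ Φ x (v x) +
        μ * ∑ i, v x i * lap N (fun y => v y i) x + ν * fderiv ℝ (divV N v) x (v x) := by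
    simp only [hconvection, hmom, hpressure, fderiv_apply_eq_sum_pd _ x (v x), Finset.mul_sum,
      ← Finset.sum_add_distrib, ← Finset.sum_neg_distrib]
    exact Finset.sum_congr rfl fun i _ => by ring
  rw [divV_add ((contDiff_potentialFlux k a hγ.le hρ hΦ (hv.of_le one_le_two)).differentiable
      one_ne_zero x) ((contDiff_viscousKineticFlux μ ν hρ hv).differentiable one_ne_zero x),
    divV_potentialFlux k a hγ hρx_diff (hΦ.differentiable one_ne_zero x) hvx hρx hcont,
    divV_viscousKineticFlux μ ν hρx_diff hv hcont, hpower]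
  ring

end EnergyIdentity

section Integrability

variable {N : ℕ} {ρ Φ : EuclideanSpace ℝ (Fin N) → ℝ}
  {v : EuclideanSpace ℝ (Fin N) → EuclideanSpace ℝ (Fin N)}

lemma memLp_two_fderiv_of_integrable_gradSq (hv : ContDiff ℝ 1 v)
    (hgrad : Integrable (gradSq N v)) : MemLp (fderiv ℝ v) 2 volume := by
  have hmeas := (hv.continuous_fderiv one_ne_zero).aestronglyMeasurable (μ := volume)
  refine (memLp_two_iff_integrable_sq_norm hmeas).2 <| hgrad.mono' (hmeas.norm.pow 2) <|
    ae_of_all _ fun x => ?_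
  rw [Real.norm_of_nonneg (sq_nonneg _)]
  exact norm_fderiv_sq_le_gradSq (hv.differentiable one_ne_zero x)

lemma memLp_divV {p : ℝ≥0∞} (hv : ContDiff ℝ 1 v) (hDv : MemLp (fderiv ℝ v) p volume) :
    MemLp (divV N v) p volume :=
  hDv.of_le_mul (contDiff_divV (n := 0) hv).continuous.aestronglyMeasurable
    (ae_of_all _ fun x => norm_divV_le (hv.differentiable one_ne_zero x))

lemma memLp_top_of_continuous_of_abs_le {f : EuclideanSpace ℝ (Fin N) → ℝ} (hf : Continuous f)
    (hbdd : ∃ M, ∀ x, |f x| ≤ M) : MemLp f ∞ volume :=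
  hbdd.elim fun M hM => memLp_top_of_bound hf.aestronglyMeasurable M (ae_of_all _ hM)

lemma memLp_potentialFlux {p : ℝ≥0∞} (k a : ℝ) {γ : ℝ} (hγ : 0 ≤ γ) (hρ : Continuous ρ)
    (hΦ : Continuous Φ) (hρb : ∃ M, ∀ x, |ρ x| ≤ M) (hΦb : ∃ M, ∀ x, |Φ x| ≤ M)
    (hv : MemLp v p volume) : MemLp (potentialFlux k a γ ρ Φ v) p volume := by
  have hρ_rpow_bdd : ∃ M, ∀ x, |ρ x ^ γ| ≤ M := hρb.imp' (· ^ γ) fun M hM x =>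
    (Real.abs_rpow_le_abs_rpow _ _).trans (Real.rpow_le_rpow (abs_nonneg _) (hM x) hγ)
  have hρ_top := memLp_top_of_continuous_of_abs_le hρ hρb
  have hΦ_top := memLp_top_of_continuous_of_abs_le hΦ hΦb
  have hρ_rpow_top := memLp_top_of_continuous_of_abs_le (hρ.rpow_const fun _ => .inr hγ) hρ_rpow_bdd
  have hρv : MemLp (ρ • v) p volume := hv.smul hρ_top
  have hforce : MemLp (Φ • ρ • v) p volume := hρv.smul hΦ_top
  have hpressure : MemLp ((fun x => ρ x ^ γ) • v) p volume := hv.smul hρ_rpow_top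
  exact (hforce.const_smul k).add (hpressure.const_smul _)

lemma memLp_one_gradient_norm_sq (hv : ContDiff ℝ 1 v) (hv2 : MemLp v 2 volume)
    (hDv : MemLp (fderiv ℝ v) 2 volume) : MemLp (gradient fun x => ‖v x‖ ^ 2) 1 volume :=
  (memLp_one_fderiv_norm_sq hv hv2 hDv).of_le
    (contDiff_gradient (n := 0) (hv.norm_sq ℝ)).continuous.aestronglyMeasurable
    (ae_of_all _ fun x => by rw [← toDual_gradient, LinearIsometryEquiv.norm_map])

lemma memLp_viscousKineticFlux (μ ν : ℝ) (hρ : Continuous ρ) (hρb : ∃ M, ∀ x, |ρ x| ≤ M)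
    (hv : ContDiff ℝ 1 v) (hv2 : MemLp v 2 volume) (hv3 : MemLp v 3 volume)
    (hDv : MemLp (fderiv ℝ v) 2 volume) : MemLp (viscousKineticFlux μ ν ρ v) 1 volume := by
  have hdilation : MemLp (divV N v • v) 1 volume := hv2.smul (memLp_divV hv hDv)
  have hρv : MemLp (ρ • v) 3 volume := hv3.smul (memLp_top_of_continuous_of_abs_le hρ hρb)
  have hsq : MemLp (fun x => ‖v x‖ ^ 2) (3 / 2) volume :=
    (memLp_norm_sq_iff hv3.1).2 (by rwa [ENNReal.mul_div_cancel two_ne_zero ENNReal.ofNat_ne_top])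
  have : ENNReal.HolderTriple (3 / 2) 3 1 := ⟨by
    rw [ENNReal.inv_div (.inl ENNReal.ofNat_ne_top) (.inl two_ne_zero), ← one_div 3,
      ENNReal.div_add_div_same, inv_one, two_add_one_eq_three,
      ENNReal.div_self three_ne_zero ENNReal.ofNat_ne_top]⟩
  have hkinetic : MemLp ((fun x => ‖v x‖ ^ 2) • ρ • v) 1 volume := hρv.smul hsq
  exact ((memLp_one_gradient_norm_sq hv hv2 hDv).const_smul _).add
    ((hdilation.const_smul ν).add (hkinetic.const_smul _))

end Integrability

section Liouville

lemma eq_zero_of_fderiv_eq_zero_of_memLp {E F : Type*} [NormedAddCommGroup E] [NormedSpace ℝ E]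
    [MeasurableSpace E] [NormedAddCommGroup F] [NormedSpace ℝ F] {μ : Measure E}
    (hμ : μ Set.univ = ∞) {f : E → F} {p : ℝ≥0∞} (hp0 : p ≠ 0) (hp : p ≠ ∞)
    (hf : Differentiable ℝ f) (hDf : ∀ x, fderiv ℝ f x = 0) (hfp : MemLp f p μ) (x : E) :
    f x = 0 := by
  have hconst : f = fun _ => f x := funext fun y => is_const_of_fderiv_eq_zero hf hDf y x
  rw [hconst, memLp_const_iff hp0 hp, hμ] at hfp
  exact hfp.resolve_right (lt_irrefl _)

variable {N : ℕ} {k a γ μ ν : ℝ} {p : ℝ≥0∞} {ρ Φ : EuclideanSpace ℝ (Fin N) → ℝ}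
  {v : EuclideanSpace ℝ (Fin N) → EuclideanSpace ℝ (Fin N)}

lemma gradSq_eq_zero_of_integral_dissipation_eq_zero (hμ : 0 < μ) (hν : 0 ≤ ν)
    (hv : ContDiff ℝ 1 v) (hint : Integrable fun x => μ * gradSq N v x + ν * divV N v x ^ 2)
    (hzero : ∫ x, (μ * gradSq N v x + ν * divV N v x ^ 2) = 0) (x : EuclideanSpace ℝ (Fin N)) :
    gradSq N v x = 0 := by
  have hgrad (y : EuclideanSpace ℝ (Fin N)) : 0 ≤ μ * gradSq N v y :=
    mul_nonneg hμ.le (gradSq_nonneg v y)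
  have hdiv (y : EuclideanSpace ℝ (Fin N)) : 0 ≤ ν * divV N v y ^ 2 :=
    mul_nonneg hν (sq_nonneg _)
  have hcont : Continuous fun x => μ * gradSq N v x + ν * divV N v x ^ 2 :=
    ((continuous_gradSq hv).const_mul μ).add
      (((contDiff_divV (n := 0) hv).continuous.pow 2).const_mul ν)
  have hae := (integral_eq_zero_iff_of_nonneg (fun y => add_nonneg (hgrad y) (hdiv y)) hint).1 hzero
  have hx := congrFun ((hcont.ae_eq_iff_eq volume continuous_zero).1 hae) x
  exact (mul_eq_zero.1 ((add_eq_zero_iff_of_nonneg (hgrad x) (hdiv x)).1 hx).1).resolve_left hμ.ne'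

theorem velocity_eq_zero (hN : 2 ≤ N) (hμ : 0 < μ) (hν : 0 ≤ ν) (hγ : 1 < γ)
    (hρ : ContDiff ℝ 1 ρ) (hΦ : ContDiff ℝ 1 Φ) (hv : ContDiff ℝ 2 v) (hρ0 : ∀ x, 0 ≤ ρ x)
    (hcont : ∀ x, divV N (ρ • v) x = 0)
    (hmom : ∀ x i, ∑ j, pd N (fun y => ρ y * v y j * v y i) j x =
      -pd N (fun y => a * ρ y ^ γ) i x + k * ρ x * pd N Φ i x +
        μ * lap N (fun y => v y i) x + ν * pd N (divV N v) i x)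
    (hρb : ∃ M, ∀ x, |ρ x| ≤ M) (hΦb : ∃ M, ∀ x, |Φ x| ≤ M) (hgrad : Integrable (gradSq N v))
    [hpN : p.HolderConjugate N] (hvp : MemLp v p volume) (hv3 : MemLp v 3 volume)
    (x : EuclideanSpace ℝ (Fin N)) : v x = 0 := by
  have hv₁ : ContDiff ℝ 1 v := hv.of_le one_le_two
  have hp2 : p ≤ 2 := holderConjugate_natCast_le_two hN
  have hp : p ≠ ∞ := ne_top_of_le_ne_top ENNReal.ofNat_ne_top hp2
  have hv2 : MemLp v 2 volume :=
    memLp_of_memLp_of_memLp hpN.ne_zero hp2 (by norm_num) ENNReal.ofNat_ne_top hvp hv3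
  have hDv := memLp_two_fderiv_of_integrable_gradSq hv₁ hgrad
  have hdissipation : divV N (potentialFlux k a γ ρ Φ v + viscousKineticFlux μ ν ρ v) =
      fun x => μ * gradSq N v x + ν * divV N v x ^ 2 :=
    funext fun x => divV_energyFlux hγ hρ hΦ hv (hρ0 x) (hcont x) (hmom x)
  have hint : Integrable fun x => μ * gradSq N v x + ν * divV N v x ^ 2 :=
    (hgrad.const_mul μ).add ((memLp_divV hv₁ hDv).integrable_sq.const_mul ν)
  have hzero := integral_divV_eq_zero hp
    (memLp_potentialFlux k a (zero_le_one.trans hγ.le) hρ.continuous hΦ.continuous hρb hΦb hvp)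
    (memLp_viscousKineticFlux μ ν hρ.continuous hρb hv₁ hv2 hv3 hDv)
    ((contDiff_potentialFlux k a hγ.le hρ hΦ hv₁).add (contDiff_viscousKineticFlux μ ν hρ hv))
    (by rwa [hdissipation])
  simp only [hdissipation] at hzero
  have hfderiv (y : EuclideanSpace ℝ (Fin N)) : fderiv ℝ v y = 0 := by
    have hle := norm_fderiv_sq_le_gradSq (hv₁.differentiable one_ne_zero y)
    rw [gradSq_eq_zero_of_integral_dissipation_eq_zero hμ hν hv₁ hint hzero] at hle
    exact norm_eq_zero.1 (pow_eq_zero_iff two_ne_zero |>.1 (hle.antisymm (sq_nonneg _)))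
  have : Nonempty (Fin N) := ⟨⟨0, by lia⟩⟩
  exact eq_zero_of_fderiv_eq_zero_of_memLp (measure_univ_of_isAddLeftInvariant _) hpN.ne_zero hp
    (hv₁.differentiable one_ne_zero) hfderiv hvp x

lemma force_eq_pressure_of_velocity_eq_zero (hγ : 1 ≤ γ) (hρ : ContDiff ℝ 1 ρ)
    (hv : ∀ x, v x = 0) {x : EuclideanSpace ℝ (Fin N)} {i : Fin N}
    (hmom : ∑ j, pd N (fun y => ρ y * v y j * v y i) j x =
      -pd N (fun y => a * ρ y ^ γ) i x + k * ρ x * pd N Φ i x +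
        μ * lap N (fun y => v y i) x + ν * pd N (divV N v) i x) :
    k * ρ x * pd N Φ i x = a * pd N (fun y => ρ y ^ γ) i x := by
  have hpd_zero (j : Fin N) : pd N (fun _ => 0) j = fun _ => 0 :=
    funext fun y => by rw [pd, fderiv_const_apply, zero_apply]
  have hdiv : divV N v = fun _ => 0 := by
    funext y
    simp only [divV, hv, PiLp.zero_apply, hpd_zero, Finset.sum_const_zero]
  rw [hdiv, pd_const_mul a (hρ.differentiable one_ne_zero x |>.rpow_const (.inr hγ))] at hmom
  simp only [hv, PiLp.zero_apply, mul_zero, lap, hpd_zero, Finset.sum_const_zero] at hmom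
  linarith

end Liouville

theorem liouville_NSP_general {N : ℕ} (hN : 2 ≤ N) {μ lam k a γ : ℝ} (hμ : 0 < μ)
    (hlam : 0 ≤ lam + μ) (hγ : 1 < γ) {ρ Φ : EuclideanSpace ℝ (Fin N) → ℝ}
    {v : EuclideanSpace ℝ (Fin N) → EuclideanSpace ℝ (Fin N)} (hρ : ContDiff ℝ 1 ρ)
    (hΦ : ContDiff ℝ 1 Φ) (hv : ContDiff ℝ 2 v) (hρ0 : ∀ x, 0 ≤ ρ x)
    (hcont : ∀ x, ∑ j, pd N (fun y => ρ y * v y j) j x = 0)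
    (hmom : ∀ x, ∀ i : Fin N,
      ∑ j, pd N (fun y => ρ y * v y j * v y i) j x =
        - pd N (fun y => a * ρ y ^ γ) i x + k * ρ x * pd N Φ i x
          + μ * lap N (fun y => v y i) x + (μ + lam) * pd N (divV N v) i x)
    (hρb : ∃ M, ∀ x, |ρ x| ≤ M) (hΦb : ∃ M, ∀ x, |Φ x| ≤ M)
    (hgrad : Integrable (fun x => ∑ i, ∑ j, (pd N (fun y => v y i) j x) ^ 2))
    {p : ℝ≥0∞} [hpN : p.HolderConjugate N] (hvp : MemLp v p volume)
    (hv3 : 7 ≤ N → MemLp v 3 volume) :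
    (∀ x, v x = 0) ∧
      ∀ x, ∀ i : Fin N, k * ρ x * pd N Φ i x = a * pd N (fun y => ρ y ^ γ) i x := by
  have hv₁ : ContDiff ℝ 1 v := hv.of_le one_le_two
  have hcube : MemLp v 3 volume := by
    rcases le_or_gt 7 N with h7 | h7
    · exact hv3 h7
    rw [← finrank_euclideanSpace_fin (𝕜 := ℝ) (n := N)] at hN hpN h7
    exact memLp_three_of_memLp_fderiv hN (Nat.lt_succ_iff.1 h7) hv₁ hvp
      (memLp_two_fderiv_of_integrable_gradSq hv₁ hgrad)
  have hv0 : ∀ x, v x = 0 :=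
    velocity_eq_zero hN hμ (add_comm lam μ ▸ hlam) hγ hρ hΦ hv hρ0 hcont hmom hρb hΦb hgrad hvp
      hcube
  exact ⟨hv0, fun x i => force_eq_pressure_of_velocity_eq_zero hγ.le hρ hv0 (hmom x i)⟩

/-- Liouville type theorem for the stationary compressible
Navier–Stokes–Poisson system on `ℝ^N`, `N ≥ 2`. -/
theorem liouville_NSP
    (N : ℕ) (hN : 2 ≤ N)
    (μ lam k a γ ρ₀ : ℝ)
    (hμ : 0 < μ) (hlam : 0 < lam + μ) (hk : k ≠ 0) (ha : 0 < a) (hγ : 1 < γ)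
    (hρ₀ : 0 ≤ ρ₀)
    (ρ Φ : EuclideanSpace ℝ (Fin N) → ℝ)
    (v : EuclideanSpace ℝ (Fin N) → EuclideanSpace ℝ (Fin N))
    (hρsm : ContDiff ℝ (⊤ : ℕ∞) ρ) (hΦsm : ContDiff ℝ (⊤ : ℕ∞) Φ) (hvsm : ContDiff ℝ (⊤ : ℕ∞) v)
    (hρnn : ∀ x, 0 ≤ ρ x)
    -- continuity equation: div(ρ v) = 0
    (hcont : ∀ x, ∑ j, pd N (fun y => ρ y * v y j) j x = 0)
    -- momentum equation:
    -- div(ρ v ⊗ v) = -∇p + k ρ ∇Φ + μ Δv + (μ+λ) ∇ div v,  p = a ρ^γ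
    (hmom : ∀ x, ∀ i : Fin N,
      ∑ j, pd N (fun y => ρ y * v y j * v y i) j x =
        - pd N (fun y => a * ρ y ^ γ) i x + k * ρ x * pd N Φ i x
          + μ * lap N (fun y => v y i) x + (μ + lam) * pd N (divV N v) i x)
    -- Poisson equation: ΔΦ = ρ - ρ₀
    (hpois : ∀ x, lap N Φ x = ρ x - ρ₀)
    -- ρ ∈ L^∞, Φ ∈ L^∞
    (hρb : ∃ M, ∀ x, |ρ x| ≤ M)
    (hΦb : ∃ M, ∀ x, |Φ x| ≤ M)
    -- ∇v ∈ L²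
    (hgrad : Integrable (fun x => ∑ i, ∑ j, (pd N (fun y => v y i) j x) ^ 2))
    -- v ∈ L^{N/(N-1)}
    (hvL : Integrable (fun x => ‖v x‖ ^ ((N : ℝ) / ((N : ℝ) - 1))))
    -- additionally v ∈ L^{3N/(N-1)} if N ≥ 7
    (hvL7 : 7 ≤ N →
      Integrable (fun x => ‖v x‖ ^ ((3 * (N : ℝ)) / ((N : ℝ) - 1)))) :
    (∀ x, v x = 0) ∧
      (∀ x, ∀ i : Fin N,
        k * ρ x * pd N Φ i x = a * pd N (fun y => ρ y ^ γ) i x) ∧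
      (∀ x, lap N Φ x = ρ x - ρ₀) := by
  have hconj := holderConjugate_ofReal_div_sub_one hN
  have hvp : MemLp v (ENNReal.ofReal (N / (N - 1))) volume :=
    memLp_ofReal_of_integrable_norm_rpow (ENNReal.ofReal_pos.1 hconj.pos)
      hvsm.continuous.aestronglyMeasurable hvL
  obtain ⟨hv0, hforce⟩ := liouville_NSP_general hN hμ hlam.le hγ (hρsm.of_le (by norm_cast))
    (hΦsm.of_le (by norm_cast)) (hvsm.of_le (by norm_cast)) hρnn hcont hmom hρb hΦb hgrad hvp
    fun h7 => memLp_three_of_integrable_norm_rpow hN hvp (hvL7 h7)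
  exact ⟨hv0, hforce, hpois⟩
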